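/- Let N ≥ 2 be an integer, ω > 0, and 1 < p < p_max, and let u be a ground-state profile of (QLS). Then there exists a smooth, compactly supported function ξ : ℝ^N → ℝ with ∫_{ℝ^N} ξ² dx = 1 and ∫_{ℝ^N} (L₊ξ)(x)·ξ(x) dx < 0. (In particular, the first eigenvalue μ₁ = inf σ(L₊) of L₊ is negative.) -/

import Mathlib

open MeasureTheory Real Filter Topology

noncomputable section

/-- Partial derivative along the `i`-th coordinate direction. -/
def pd {N : ℕ} {F : Type*} [NormedAddCommGroup F] [NormedSpace ℝ F]
    (i : Fin N) (f : EuclideanSpace ℝ (Fin N) → F) (x : EuclideanSpace ℝ (Fin N)) : F :=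
  fderiv ℝ f x (EuclideanSpace.single i 1)

/-- Euclidean Laplacian. -/
def lap {N : ℕ} {F : Type*} [NormedAddCommGroup F] [NormedSpace ℝ F]
    (f : EuclideanSpace ℝ (Fin N) → F) (x : EuclideanSpace ℝ (Fin N)) : F :=
  ∑ i : Fin N, pd i (pd i f) x

/-- Squared norm of the gradient of a real-valued function: `|∇f|²`. -/
def gradsq {N : ℕ} (f : EuclideanSpace ℝ (Fin N) → ℝ) (x : EuclideanSpace ℝ (Fin N)) : ℝ :=
  ∑ i : Fin N, (pd i f x) ^ 2

/-- A ground-state profile of the quasilinear Schrödinger equation (QLS)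
`-Δu - uΔ(u²) + ωu - u^p = 0` on `ℝ^N`: smooth, positive, radially symmetric with a
strictly decreasing positive profile, solves (QLS) pointwise, and decays
exponentially together with all its derivatives. -/
structure IsGroundState (N : ℕ) (ω p : ℝ) (u : EuclideanSpace ℝ (Fin N) → ℝ) : Prop where
  smooth : ContDiff ℝ (⊤ : ℕ∞) u
  pos : ∀ x, 0 < u x
  radial : ∃ U : ℝ → ℝ, StrictAntiOn U (Set.Ici 0) ∧ (∀ r, 0 ≤ r → 0 < U r) ∧
      ∀ x, u x = U ‖x‖
  solves : ∀ x, -lap u x - u x * lap (fun y => (u y) ^ 2) x + ω * u x - (u x) ^ p = 0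
  decay : ∀ k : ℕ, ∃ C > 0, ∃ δ > 0, ∀ x,
      ‖iteratedFDeriv ℝ k u x‖ ≤ C * Real.exp (-δ * ‖x‖)

/-- The linearized operator `L₊` around `u` (real-valued functions). -/
def Lplus {N : ℕ} (ω p : ℝ) (u η : EuclideanSpace ℝ (Fin N) → ℝ)
    (x : EuclideanSpace ℝ (Fin N)) : ℝ :=
  -lap η x - 2 * u x * lap (fun y => u y * η y) x + ω * η x
    - (lap (fun y => (u y) ^ 2) x + p * u x ^ (p - 1)) * η x

/-- The linearized operator `L₋` around `u`. -/
def Lminus {N : ℕ} (ω p : ℝ) (u ζ : EuclideanSpace ℝ (Fin N) → ℝ)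
    (x : EuclideanSpace ℝ (Fin N)) : ℝ :=
  -lap ζ x + ω * ζ x - (lap (fun y => (u y) ^ 2) x + u x ^ (p - 1)) * ζ x


lemma pd_contDiffAt {N : ℕ} {f : EuclideanSpace ℝ (Fin N) → ℝ} {x} (i : Fin N)
    (hf : ContDiffAt ℝ (⊤ : ℕ∞) f x) : ContDiffAt ℝ (⊤ : ℕ∞) (pd i f) x := by
  unfold pd
  exact (hf.fderiv_right (m := (⊤ : ℕ∞)) (by simp)).clm_apply contDiffAt_const

lemma cda_diff {N : ℕ} {f : EuclideanSpace ℝ (Fin N) → ℝ} {x}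
    (hf : ContDiffAt ℝ (⊤ : ℕ∞) f x) : DifferentiableAt ℝ f x :=
  hf.differentiableAt (by simp)

lemma cda_ev {N : ℕ} {f : EuclideanSpace ℝ (Fin N) → ℝ} {x}
    (hf : ContDiffAt ℝ (⊤ : ℕ∞) f x) : ∀ᶠ y in 𝓝 x, DifferentiableAt ℝ f y := by
  have h1 : ContDiffAt ℝ 1 f x := hf.of_le (by exact_mod_cast le_top)
  filter_upwards [h1.eventually (by simp)] with y hy
  exact hy.differentiableAt (by simp)

lemma pd_congr {N : ℕ} {f g : EuclideanSpace ℝ (Fin N) → ℝ} {x} (i : Fin N)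
    (h : f =ᶠ[𝓝 x] g) : pd i f =ᶠ[𝓝 x] pd i g := by
  filter_upwards [h.fderiv (𝕜 := ℝ)] with y hy
  simp [pd, hy]

lemma lap_congr {N : ℕ} {f g : EuclideanSpace ℝ (Fin N) → ℝ} {x}
    (h : f =ᶠ[𝓝 x] g) : lap f x = lap g x := by
  unfold lap
  exact Finset.sum_congr rfl fun i _ => (pd_congr i (pd_congr i h)).eq_of_nhds

lemma pd_add {N : ℕ} {f g : EuclideanSpace ℝ (Fin N) → ℝ} {x} (i : Fin N)
    (hf : DifferentiableAt ℝ f x) (hg : DifferentiableAt ℝ g x) :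
    pd i (fun y => f y + g y) x = pd i f x + pd i g x := by
  simp [pd, fderiv_fun_add hf hg]

lemma pd_mul {N : ℕ} {f g : EuclideanSpace ℝ (Fin N) → ℝ} {x} (i : Fin N)
    (hf : DifferentiableAt ℝ f x) (hg : DifferentiableAt ℝ g x) :
    pd i (fun y => f y * g y) x = f x * pd i g x + g x * pd i f x := by
  simp [pd, fderiv_fun_mul hf hg]

lemma pd_const {N : ℕ} (c : ℝ) (x) (i : Fin N) : pd i (fun _ => c) x = 0 := by
  simp [pd]

lemma lap_mul {N : ℕ} {f g : EuclideanSpace ℝ (Fin N) → ℝ} {x}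
    (hf : ContDiffAt ℝ (⊤ : ℕ∞) f x) (hg : ContDiffAt ℝ (⊤ : ℕ∞) g x) :
    lap (fun y => f y * g y) x
      = f x * lap g x + 2 * (∑ i, pd i f x * pd i g x) + g x * lap f x := by
  unfold lap
  rw [Finset.mul_sum, Finset.mul_sum, Finset.mul_sum, ← Finset.sum_add_distrib,
    ← Finset.sum_add_distrib]
  refine Finset.sum_congr rfl fun i _ => ?_
  have h : pd i (fun y => f y * g y) =ᶠ[𝓝 x] fun y => f y * pd i g y + g y * pd i f y := by
    filter_upwards [cda_ev hf, cda_ev hg] with y h1 h2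
    exact pd_mul i h1 h2
  have hpf := pd_contDiffAt i hf
  have hpg := pd_contDiffAt i hg
  rw [(pd_congr i h).eq_of_nhds,
    pd_add i (cda_diff (hf.mul hpg)) (cda_diff (hg.mul hpf)),
    pd_mul i (cda_diff hf) (cda_diff hpg), pd_mul i (cda_diff hg) (cda_diff hpf)]
  ring

lemma Lplus_congr {N : ℕ} (ω p : ℝ) (u : EuclideanSpace ℝ (Fin N) → ℝ)
    {f g : EuclideanSpace ℝ (Fin N) → ℝ} {x} (h : f =ᶠ[𝓝 x] g) :
    Lplus ω p u f x = Lplus ω p u g x := by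
  unfold Lplus
  have h2 : (fun y => u y * f y) =ᶠ[𝓝 x] fun y => u y * g y := by
    filter_upwards [h] with y hy
    rw [hy]
  rw [lap_congr h, lap_congr h2, h.eq_of_nhds]

lemma Lplus_mul {N : ℕ} (ω p : ℝ) {u f g : EuclideanSpace ℝ (Fin N) → ℝ} {x}
    (hu : ContDiffAt ℝ (⊤ : ℕ∞) u x)
    (hf : ContDiffAt ℝ (⊤ : ℕ∞) f x) (hg : ContDiffAt ℝ (⊤ : ℕ∞) g x) :
    Lplus ω p u (fun y => f y * g y) x = f x * Lplus ω p u g x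
      - 2 * (1 + 2 * u x ^ 2) * (∑ i, pd i f x * pd i g x)
      - g x * ((1 + 2 * u x ^ 2) * lap f x + 4 * u x * ∑ i, pd i f x * pd i u x) := by
  have h1 : (fun y => u y * (f y * g y)) = fun y => f y * (u y * g y) := by
    funext y; ring
  have h2 : ∑ i, pd i f x * pd i (fun y => u y * g y) x
      = u x * (∑ i, pd i f x * pd i g x) + g x * (∑ i, pd i f x * pd i u x) := by
    rw [Finset.mul_sum, Finset.mul_sum, ← Finset.sum_add_distrib]
    refine Finset.sum_congr rfl fun i _ => ?_
    rw [pd_mul i (cda_diff hu) (cda_diff hg)]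
    ring
  unfold Lplus
  rw [h1, lap_mul hf hg, lap_mul hf (hu.mul hg), h2]
  ring

lemma pd_comm {N : ℕ} {f : EuclideanSpace ℝ (Fin N) → ℝ} {x} (i j : Fin N)
    (hf : ContDiffAt ℝ (⊤ : ℕ∞) f x) : pd i (pd j f) x = pd j (pd i f) x := by
  have hs : IsSymmSndFDerivAt ℝ f x :=
    hf.isSymmSndFDerivAt (by simp [minSmoothness_of_isRCLikeNormedField]; exact WithTop.coe_le_coe.2 (le_top : (2 : ℕ∞) ≤ ⊤))
  have hd : DifferentiableAt ℝ (fderiv ℝ f) x :=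
    (hf.fderiv_right (m := (⊤ : ℕ∞)) (by simp)).differentiableAt (by simp)
  have key : ∀ a b : Fin N, pd a (pd b f) x =
      fderiv ℝ (fderiv ℝ f) x (EuclideanSpace.single a 1) (EuclideanSpace.single b 1) := by
    intro a b
    unfold pd
    rw [fderiv_clm_apply hd (differentiableAt_const _)]
    simp
  rw [key, key]
  exact hs _ _

lemma pd_lap {N : ℕ} {f : EuclideanSpace ℝ (Fin N) → ℝ} (hf : ContDiff ℝ (⊤ : ℕ∞) f)
    (i : Fin N) (x) : pd i (lap f) x = lap (pd i f) x := by
  have h1 : pd i (lap f) x = ∑ j, pd i (pd j (pd j f)) x := by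
    have : lap f = fun y => ∑ j, pd j (pd j f) y := rfl
    rw [this]
    change fderiv ℝ (fun y => ∑ j, pd j (pd j f) y) x (EuclideanSpace.single i 1) = _
    rw [fderiv_fun_sum]
    · simp [pd]
    · intro j _
      exact cda_diff (pd_contDiffAt j (pd_contDiffAt j hf.contDiffAt))
  rw [h1]
  unfold lap
  refine Finset.sum_congr rfl fun j _ => ?_
  rw [pd_comm i j (pd_contDiffAt j hf.contDiffAt)]
  have : pd i (pd j f) = pd j (pd i f) := by
    funext y
    exact pd_comm i j hf.contDiffAt
  rw [this]

lemma lap_contDiffAt {N : ℕ} {f : EuclideanSpace ℝ (Fin N) → ℝ} {x}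
    (hf : ContDiffAt ℝ (⊤ : ℕ∞) f x) : ContDiffAt ℝ (⊤ : ℕ∞) (lap f) x := by
  unfold lap
  exact ContDiffAt.sum fun i _ => pd_contDiffAt i (pd_contDiffAt i hf)

/-- translations generate the kernel -/
lemma Lplus_pd {N : ℕ} {ω p : ℝ} {u : EuclideanSpace ℝ (Fin N) → ℝ}
    (hu : IsGroundState N ω p u) (i : Fin N) (x) : Lplus ω p u (pd i u) x = 0 := by
  have hs := hu.smooth
  have hsx : ∀ x, ContDiffAt ℝ (⊤ : ℕ∞) u x := fun x => hs.contDiffAt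
  have hs2 : ContDiff ℝ (⊤ : ℕ∞) (fun y => u y ^ 2) := hs.pow 2
  have hd : DifferentiableAt ℝ u x := cda_diff (hsx x)
  have hdl : DifferentiableAt ℝ (lap u) x := cda_diff (lap_contDiffAt (hsx x))
  have hdl2 : DifferentiableAt ℝ (lap fun y => u y ^ 2) x :=
    cda_diff (lap_contDiffAt hs2.contDiffAt)
  have hpow : HasFDerivAt (fun y => u y ^ p) ((p * u x ^ (p - 1)) • fderiv ℝ u x) x :=
    hd.hasFDerivAt.rpow_const (Or.inl (hu.pos x).ne')
  have h0 : (fun y => lap u y + u y * lap (fun y => (u y) ^ 2) y) =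
      fun y => ω * u y + (-1) * (u y) ^ p := by
    funext y
    have := hu.solves y
    linarith
  have h1 := congrArg (fun f => pd i f x) h0
  rw [pd_add i hdl (hd.fun_mul hdl2), pd_mul i hd hdl2,
    pd_add i (hd.const_mul ω) (hpow.differentiableAt.const_mul (-1)),
    pd_mul i (differentiableAt_const _) hd,
    pd_mul i (differentiableAt_const _) hpow.differentiableAt,
    pd_const, pd_const, pd_lap hs, pd_lap hs2] at h1
  have h2 : pd i (fun y => u y ^ p) x = p * u x ^ (p - 1) * pd i u x := by
    change fderiv ℝ (fun y => u y ^ p) x (EuclideanSpace.single i 1) = _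
    rw [hpow.fderiv]
    simp [pd]
  have h3 : pd i (fun y => u y ^ 2) = fun y => 2 * (u y * pd i u y) := by
    funext y
    have : (fun y => u y ^ 2) = fun y => u y * u y := by funext y; ring
    rw [this, pd_mul i (cda_diff (hsx y)) (cda_diff (hsx y))]
    ring
  rw [h2, h3, lap_mul contDiffAt_const ((hsx x).mul (pd_contDiffAt i (hsx x)))] at h1
  have h4 : lap (fun _ : EuclideanSpace ℝ (Fin N) => (2 : ℝ)) x = 0 := by
    have : ∀ i : Fin N, pd i (fun _ : EuclideanSpace ℝ (Fin N) => (2 : ℝ)) = fun _ => 0 := by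
      intro i; funext y; exact pd_const 2 y i
    simp [lap, this, pd_const]
  simp only [pd_const, h4, zero_mul, Finset.sum_const_zero] at h1
  unfold Lplus
  linarith

def wf {N : ℕ} (u : EuclideanSpace ℝ (Fin N) → ℝ) (x : EuclideanSpace ℝ (Fin N)) : ℝ :=
  (∑ i, x i * pd i u x) / ‖x‖ ^ 2

lemma fderiv_self_eq {N : ℕ} (u : EuclideanSpace ℝ (Fin N) → ℝ) (x h : EuclideanSpace ℝ (Fin N)) :
    fderiv ℝ u x h = ∑ i, h i * pd i u x := by
  have hx : h = ∑ i, h i • EuclideanSpace.single i (1 : ℝ) := by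
    ext j
    simp [Finset.sum_apply, Pi.single_apply]
  conv_lhs => rw [hx]
  simp [pd]

lemma pd_radial {N : ℕ} {ω p : ℝ} {u : EuclideanSpace ℝ (Fin N) → ℝ}
    (hu : IsGroundState N ω p u) (i : Fin N) (x) : pd i u x = x i * wf u x := by
  obtain ⟨U, -, -, hU⟩ := hu.radial
  have hd : DifferentiableAt ℝ u x := cda_diff hu.smooth.contDiffAt
  have key : ∀ h : EuclideanSpace ℝ (Fin N), inner ℝ x h = 0 → fderiv ℝ u x h = 0 := by
    intro h hh
    have hn : ∀ t : ℝ, ‖x + t • h‖ = ‖x + t • (-h)‖ := by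
      intro t
      have e1 := norm_add_sq_real x (t • h)
      have e2 := norm_add_sq_real x (t • (-h))
      simp only [inner_smul_right, inner_neg_right, hh, norm_smul, norm_neg] at e1 e2
      have : ‖x + t • h‖ ^ 2 = ‖x + t • (-h)‖ ^ 2 := by rw [e1, e2]; ring
      exact (sq_eq_sq₀ (norm_nonneg _) (norm_nonneg _)).1 this
    have l1 := (hd.hasFDerivAt.hasLineDerivAt h).lineDeriv
    have l2 := (hd.hasFDerivAt.hasLineDerivAt (-h)).lineDeriv
    have : lineDeriv ℝ u x h = lineDeriv ℝ u x (-h) := by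
      unfold lineDeriv
      congr 1
      funext t
      rw [hU, hU, hn t]
    rw [l1, l2, map_neg] at this
    linarith
  have hi : inner ℝ x (EuclideanSpace.single i (1 : ℝ) - (x i / ‖x‖ ^ 2) • x) = 0 := by
    rw [inner_sub_right, inner_smul_right, real_inner_self_eq_norm_sq]
    by_cases hx : x = 0
    · subst hx; simp
    · have : ‖x‖ ≠ 0 := norm_ne_zero_iff.2 hx
      field_simp
      simp [EuclideanSpace.inner_single_right]
  have h2 := key _ hi
  rw [map_sub, map_smul, fderiv_self_eq u x x] at h2
  have h3 : pd i u x = fderiv ℝ u x (EuclideanSpace.single i 1) := rfl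
  rw [h3, wf]
  simp only [smul_eq_mul] at h2
  rw [sub_eq_zero.1 h2]
  ring

lemma coord_contDiff {N : ℕ} (i : Fin N) :
    ContDiff ℝ (⊤ : ℕ∞) (fun y : EuclideanSpace ℝ (Fin N) => y i) :=
  (EuclideanSpace.proj (𝕜 := ℝ) i).contDiff

lemma pd_coord {N : ℕ} (i j : Fin N) (x : EuclideanSpace ℝ (Fin N)) :
    pd j (fun y : EuclideanSpace ℝ (Fin N) => y i) x = if j = i then 1 else 0 := by
  have : fderiv ℝ (fun y : EuclideanSpace ℝ (Fin N) => y i) x = EuclideanSpace.proj (𝕜 := ℝ) i :=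
    (EuclideanSpace.proj (𝕜 := ℝ) i).hasFDerivAt.fderiv
  simp [pd, this, eq_comm]

lemma lap_coord {N : ℕ} (i : Fin N) (x : EuclideanSpace ℝ (Fin N)) :
    lap (fun y : EuclideanSpace ℝ (Fin N) => y i) x = 0 := by
  have : ∀ j : Fin N, pd j (fun y : EuclideanSpace ℝ (Fin N) => y i)
      = fun _ => if j = i then 1 else 0 := fun j => funext fun y => pd_coord i j y
  simp [lap, this, pd_const]

lemma pd_norm {N : ℕ} (i : Fin N) {x : EuclideanSpace ℝ (Fin N)} (hx : x ≠ 0) :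
    ‖x‖ * pd i (fun y => ‖y‖) x = x i := by
  have hd : DifferentiableAt ℝ (fun y : EuclideanSpace ℝ (Fin N) => ‖y‖) x :=
    (contDiffAt_norm ℝ hx (n := 1)).differentiableAt (by simp)
  have h1 := pd_mul i hd hd
  have h2 : pd i (fun y : EuclideanSpace ℝ (Fin N) => ‖y‖ * ‖y‖) x = 2 * x i := by
    have e : (fun y : EuclideanSpace ℝ (Fin N) => ‖y‖ * ‖y‖) = fun y => ‖y‖ ^ 2 := by
      funext y; ring
    rw [e]
    unfold pd
    rw [(hasStrictFDerivAt_norm_sq x).hasFDerivAt.fderiv]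
    simp [EuclideanSpace.inner_single_right]
  linarith

lemma norm_cda {N : ℕ} {x : EuclideanSpace ℝ (Fin N)} (hx : x ≠ 0) :
    ContDiffAt ℝ (⊤ : ℕ∞) (fun y : EuclideanSpace ℝ (Fin N) => ‖y‖) x := contDiffAt_norm ℝ hx

lemma lap_norm {N : ℕ} {x : EuclideanSpace ℝ (Fin N)} (hx : x ≠ 0) :
    ‖x‖ * lap (fun y => ‖y‖) x = N - 1 := by
  have hn : ‖x‖ ≠ 0 := norm_ne_zero_iff.2 hx
  have h : ∀ i : Fin N, ‖x‖ * pd i (pd i (fun y => ‖y‖)) x = 1 - x i ^ 2 / ‖x‖ ^ 2 := by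
    intro i
    have hev : (fun y => ‖y‖ * pd i (fun y => ‖y‖) y) =ᶠ[𝓝 x] fun y => y i := by
      filter_upwards [isOpen_ne.mem_nhds hx] with y hy
      exact pd_norm i hy
    have h1 := (pd_congr i hev).eq_of_nhds
    rw [pd_coord, if_pos rfl, pd_mul i (cda_diff (norm_cda hx))
      (cda_diff (pd_contDiffAt i (norm_cda hx)))] at h1
    have h2 : pd i (fun y => ‖y‖) x = x i / ‖x‖ := by
      rw [← pd_norm i hx]; field_simp
    rw [h2] at h1
    rw [← h1]
    field_simp
    ring
  unfold lap
  rw [Finset.mul_sum, Finset.sum_congr rfl fun i _ => h i, Finset.sum_sub_distrib,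
    ← Finset.sum_div, ← EuclideanSpace.real_norm_sq_eq]
  field_simp
  simp

lemma wf_cda {N : ℕ} {u : EuclideanSpace ℝ (Fin N) → ℝ} (hu : ContDiff ℝ (⊤ : ℕ∞) u)
    {x : EuclideanSpace ℝ (Fin N)} (hx : x ≠ 0) : ContDiffAt ℝ (⊤ : ℕ∞) (wf u) x := by
  unfold wf
  refine ContDiffAt.div ?_ ((norm_cda hx).pow 2) (pow_ne_zero 2 (norm_ne_zero_iff.2 hx))
  exact ContDiffAt.sum fun i _ => (coord_contDiff i).contDiffAt.mul (pd_contDiffAt i hu.contDiffAt)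

def mf {N : ℕ} (u : EuclideanSpace ℝ (Fin N) → ℝ) (x : EuclideanSpace ℝ (Fin N)) : ℝ :=
  ‖x‖ * wf u x

lemma mf_cda {N : ℕ} {u : EuclideanSpace ℝ (Fin N) → ℝ} (hu : ContDiff ℝ (⊤ : ℕ∞) u)
    {x : EuclideanSpace ℝ (Fin N)} (hx : x ≠ 0) : ContDiffAt ℝ (⊤ : ℕ∞) (mf u) x :=
  (norm_cda hx).mul (wf_cda hu hx)

lemma Lplus_mf {N : ℕ} {ω p : ℝ} {u : EuclideanSpace ℝ (Fin N) → ℝ}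
    (hu : IsGroundState N ω p u) {x : EuclideanSpace ℝ (Fin N)} (hx : x ≠ 0) :
    ‖x‖ * Lplus ω p u (mf u) x = - (N - 1) * (1 + 2 * u x ^ 2) * wf u x := by
  have hs : ContDiffAt ℝ (⊤ : ℕ∞) u x := hu.smooth.contDiffAt
  have hw := wf_cda hu.smooth hx
  have h1 : ∀ i : Fin N, x i * Lplus ω p u (wf u) x
      - 2 * (1 + 2 * u x ^ 2) * pd i (wf u) x - wf u x * (4 * u x * pd i u x) = 0 := by
    intro i
    have e : pd i u = fun y => y i * wf u y := funext fun y => pd_radial hu i y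
    have h := Lplus_pd hu i x
    rw [e, Lplus_mul ω p hs (coord_contDiff i).contDiffAt hw, lap_coord] at h
    simp only [pd_coord, ite_mul, one_mul, zero_mul, Finset.sum_ite_eq', Finset.mem_univ,
      if_true, mul_zero, zero_add] at h
    exact h
  have h2 : ‖x‖ ^ 2 * Lplus ω p u (wf u) x - 2 * (1 + 2 * u x ^ 2) * (∑ i, x i * pd i (wf u) x)
      - wf u x * (4 * u x * ∑ i, x i * pd i u x) = 0 := by
    rw [EuclideanSpace.real_norm_sq_eq, Finset.sum_mul]
    simp only [Finset.mul_sum]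
    rw [← Finset.sum_sub_distrib, ← Finset.sum_sub_distrib]
    refine Finset.sum_eq_zero fun i _ => ?_
    linear_combination x i * h1 i
  have h3 : ∀ g : EuclideanSpace ℝ (Fin N) → ℝ,
      ‖x‖ * (∑ i, pd i (fun y => ‖y‖) x * pd i g x) = ∑ i, x i * pd i g x := by
    intro g
    rw [Finset.mul_sum]
    refine Finset.sum_congr rfl fun i _ => ?_
    rw [← mul_assoc, pd_norm i hx]
  have h4 := Lplus_mul ω p hs (norm_cda hx) hw
  have h5 : (fun y => ‖y‖ * wf u y) = mf u := rfl
  rw [h5] at h4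
  rw [h4]
  have h6 := lap_norm hx
  linear_combination h2 - 2 * (1 + 2 * u x ^ 2) * h3 (wf u) - wf u x * 4 * u x * h3 u
    - wf u x * (1 + 2 * u x ^ 2) * h6

def Bf {N : ℕ} (u φ : EuclideanSpace ℝ (Fin N) → ℝ) (i : Fin N)
    (x : EuclideanSpace ℝ (Fin N)) : ℝ :=
  (1 + 2 * (u x * u x)) * (mf u x * mf u x) * (φ x * pd i φ x)

lemma ident {N : ℕ} {ω p : ℝ} {u φ : EuclideanSpace ℝ (Fin N) → ℝ}
    (hu : IsGroundState N ω p u) {x : EuclideanSpace ℝ (Fin N)} (hx : x ≠ 0)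
    (hφ : ContDiffAt ℝ (⊤ : ℕ∞) φ x) :
    Lplus ω p u (fun y => φ y * mf u y) x * (φ x * mf u x) =
      (1 + 2 * u x ^ 2) * wf u x ^ 2 * (‖x‖ ^ 2 * gradsq φ x - (N - 1) * φ x ^ 2)
      - ∑ i, pd i (Bf u φ i) x := by
  have hs : ContDiffAt ℝ (⊤ : ℕ∞) u x := hu.smooth.contDiffAt
  have hm := mf_cda hu.smooth hx
  have du := cda_diff hs
  have dm := cda_diff hm
  have dφ := cda_diff hφ
  have h1 : ∀ i, pd i (Bf u φ i) x = (1 + 2 * u x ^ 2) * mf u x ^ 2 *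
      ((pd i φ x) ^ 2 + φ x * pd i (pd i φ) x)
      + φ x * (2 * mf u x * (1 + 2 * u x ^ 2) * (pd i φ x * pd i (mf u) x)
        + 4 * u x * mf u x ^ 2 * (pd i φ x * pd i u x)) := by
    intro i
    have dp := cda_diff (pd_contDiffAt i hφ)
    have e : Bf u φ i = fun x =>
      (1 + 2 * (u x * u x)) * (mf u x * mf u x) * (φ x * pd i φ x) := rfl
    have d2 := (du.fun_mul du).const_mul 2
    have d1 : DifferentiableAt ℝ (fun y => 1 + 2 * (u y * u y)) x := d2.const_add 1
    rw [e, pd_mul i (d1.fun_mul (dm.fun_mul dm)) (dφ.fun_mul dp), pd_mul i d1 (dm.fun_mul dm),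
      pd_mul i dm dm, pd_mul i dφ dp, pd_add i (differentiableAt_const _) d2,
      pd_mul i (differentiableAt_const _) (du.fun_mul du), pd_mul i du du, pd_const, pd_const]
    ring
  have h2 : ∑ i, pd i (Bf u φ i) x = (1 + 2 * u x ^ 2) * mf u x ^ 2 *
      (gradsq φ x + φ x * lap φ x)
      + φ x * (2 * mf u x * (1 + 2 * u x ^ 2) * (∑ i, pd i φ x * pd i (mf u) x)
        + 4 * u x * mf u x ^ 2 * (∑ i, pd i φ x * pd i u x)) := by
    rw [Finset.sum_congr rfl fun i _ => h1 i]
    simp only [gradsq, lap, Finset.mul_sum, Finset.sum_add_distrib, mul_add]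
  rw [h2, Lplus_mul ω p hs hφ hm]
  have h3 := Lplus_mf hu hx
  have h4 : mf u x = ‖x‖ * wf u x := rfl
  have h5 : mf u x * Lplus ω p u (mf u) x = - (N - 1) * (1 + 2 * u x ^ 2) * wf u x ^ 2 := by
    rw [h4]; linear_combination wf u x * h3
  have h6 : mf u x ^ 2 = ‖x‖ ^ 2 * wf u x ^ 2 := by rw [h4]; ring
  linear_combination φ x ^ 2 * h5 + (1 + 2 * u x ^ 2) * gradsq φ x * h6

lemma pd_contDiff {N : ℕ} {f : EuclideanSpace ℝ (Fin N) → ℝ} (i : Fin N)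
    (hf : ContDiff ℝ (⊤ : ℕ∞) f) : ContDiff ℝ (⊤ : ℕ∞) (pd i f) :=
  contDiff_iff_contDiffAt.2 fun _ => pd_contDiffAt i hf.contDiffAt

lemma pd_compact {N : ℕ} {f : EuclideanSpace ℝ (Fin N) → ℝ} (i : Fin N)
    (hf : HasCompactSupport f) : HasCompactSupport (pd i f) :=
  hf.fderiv_apply (𝕜 := ℝ) _

lemma pd_integrable {N : ℕ} {f : EuclideanSpace ℝ (Fin N) → ℝ} (i : Fin N)
    (hf : ContDiff ℝ (⊤ : ℕ∞) f) (hc : HasCompactSupport f) : Integrable (pd i f) :=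
  (pd_contDiff i hf).continuous.integrable_of_hasCompactSupport (pd_compact i hc)

lemma integral_pd {N : ℕ} {f : EuclideanSpace ℝ (Fin N) → ℝ} (i : Fin N)
    (hf : ContDiff ℝ (⊤ : ℕ∞) f) (hc : HasCompactSupport f) : ∫ x, pd i f x = 0 := by
  have h := integral_mul_fderiv_eq_neg_fderiv_mul_of_integrable (𝕜 := ℝ)
    (μ := (volume : Measure (EuclideanSpace ℝ (Fin N))))
    (f := fun _ => (1 : ℝ)) (g := f) (v := EuclideanSpace.single i 1) (by simp)
    (by simp only [one_mul]; exact pd_integrable i hf hc)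
    (by simpa using hf.continuous.integrable_of_hasCompactSupport hc)
    (fun x _ => differentiableAt_const _) (fun x _ => cda_diff hf.contDiffAt)
  simpa [pd] using h

lemma xi_smooth {N : ℕ} {u φ : EuclideanSpace ℝ (Fin N) → ℝ} (hu : ContDiff ℝ (⊤ : ℕ∞) u)
    (hφ : ContDiff ℝ (⊤ : ℕ∞) φ) (h0 : φ =ᶠ[𝓝 0] fun _ => 0) :
    ContDiff ℝ (⊤ : ℕ∞) (fun y => φ y * mf u y) := by
  rw [contDiff_iff_contDiffAt]
  intro x
  by_cases hx : x = 0
  · subst hx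
    have : (fun y => φ y * mf u y) =ᶠ[𝓝 0] fun _ => 0 := by
      filter_upwards [h0] with y hy
      rw [hy, zero_mul]
    exact contDiffAt_const.congr_of_eventuallyEq this
  · exact hφ.contDiffAt.mul (mf_cda hu hx)

lemma Bf_smooth {N : ℕ} {u φ : EuclideanSpace ℝ (Fin N) → ℝ} (hu : ContDiff ℝ (⊤ : ℕ∞) u)
    (hφ : ContDiff ℝ (⊤ : ℕ∞) φ) (h0 : φ =ᶠ[𝓝 0] fun _ => 0) (i : Fin N) :
    ContDiff ℝ (⊤ : ℕ∞) (Bf u φ i) := by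
  rw [contDiff_iff_contDiffAt]
  intro x
  by_cases hx : x = 0
  · subst hx
    have : Bf u φ i =ᶠ[𝓝 0] fun _ => 0 := by
      filter_upwards [h0] with y hy
      rw [Bf, hy, zero_mul, mul_zero]
    exact contDiffAt_const.congr_of_eventuallyEq this
  · unfold Bf
    have hm := mf_cda hu hx
    exact ((contDiffAt_const.add (contDiffAt_const.mul (hu.contDiffAt.mul hu.contDiffAt))).mul
      (hm.mul hm)).mul (hφ.contDiffAt.mul (pd_contDiffAt i hφ.contDiffAt))

def Gf {N : ℕ} (u : EuclideanSpace ℝ (Fin N) → ℝ) (x : EuclideanSpace ℝ (Fin N)) : ℝ :=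
  (1 + 2 * u x ^ 2) * wf u x ^ 2

lemma ident_all {N : ℕ} {ω p : ℝ} {u φ : EuclideanSpace ℝ (Fin N) → ℝ}
    (hu : IsGroundState N ω p u) (hφ : ContDiff ℝ (⊤ : ℕ∞) φ) (h0 : φ =ᶠ[𝓝 0] fun _ => 0)
    (x : EuclideanSpace ℝ (Fin N)) :
    Lplus ω p u (fun y => φ y * mf u y) x * (φ x * mf u x) =
      Gf u x * (‖x‖ ^ 2 * gradsq φ x - (N - 1) * φ x ^ 2) - ∑ i, pd i (Bf u φ i) x := by
  by_cases hx : x = 0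
  · subst hx
    have : ∀ i, pd i (Bf u φ i) 0 = 0 := by
      intro i
      have : Bf u φ i =ᶠ[𝓝 0] fun _ => 0 := by
        filter_upwards [h0] with y hy
        rw [Bf, hy, zero_mul, mul_zero]
      rw [(pd_congr i this).eq_of_nhds, pd_const]
    simp [this, h0.eq_of_nhds]
  · exact ident hu hx hφ.contDiffAt

lemma Q_eq {N : ℕ} {ω p : ℝ} {u φ : EuclideanSpace ℝ (Fin N) → ℝ}
    (hu : IsGroundState N ω p u) (hφ : ContDiff ℝ (⊤ : ℕ∞) φ) (h0 : φ =ᶠ[𝓝 0] fun _ => 0)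
    (hc : HasCompactSupport φ)
    (hi : Integrable (fun x => Gf u x * (‖x‖ ^ 2 * gradsq φ x - (N - 1) * φ x ^ 2))) :
    ∫ x, Lplus ω p u (fun y => φ y * mf u y) x * (φ x * mf u x) =
      ∫ x, Gf u x * (‖x‖ ^ 2 * gradsq φ x - (N - 1) * φ x ^ 2) := by
  have hB := fun i => Bf_smooth hu.smooth hφ h0 i
  have hBc : ∀ i, HasCompactSupport (Bf u φ i) := by
    intro i
    have : HasCompactSupport (fun x => φ x * pd i φ x) := hc.mul_right
    exact this.mul_left
  have hBi := fun i => pd_integrable i (hB i) (hBc i)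
  rw [integral_congr_ae (Eventually.of_forall fun x => ident_all hu hφ h0 x),
    integral_sub hi (integrable_finsetSum _ fun i _ => hBi i),
    integral_finsetSum _ fun i _ => hBi i]
  simp [fun i => integral_pd i (hB i) (hBc i)]

lemma exp_integrable {N : ℕ} {c : ℝ} (hc : 0 < c) :
    Integrable (fun x : EuclideanSpace ℝ (Fin N) => Real.exp (-c * ‖x‖)) := by
  have h := integrable_one_add_norm (E := EuclideanSpace ℝ (Fin N)) (μ := volume)
    (r := ((N + 1 : ℕ) : ℝ)) (by simp)
  refine (h.const_mul ((N + 1).factorial * Real.exp c / c ^ (N + 1))).mono'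
    (by fun_prop) (Eventually.of_forall fun x => ?_)
  have hx : 0 ≤ ‖x‖ := norm_nonneg x
  have h1 := Real.pow_div_factorial_le_exp (c * (1 + ‖x‖)) (by positivity) (N + 1)
  rw [Real.norm_of_nonneg (Real.exp_pos _).le, Real.rpow_neg (by positivity), Real.rpow_natCast,
    neg_mul, Real.exp_neg]
  have h2 : Real.exp (c * (1 + ‖x‖)) = Real.exp c * Real.exp (c * ‖x‖) := by
    rw [← Real.exp_add]; ring_nf
  rw [h2, mul_pow, div_le_iff₀ (by positivity)] at h1
  rw [← div_eq_mul_inv, le_div_iff₀ (by positivity), le_div_iff₀ (by positivity),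
    inv_mul_eq_div, div_mul_eq_mul_div, div_le_iff₀ (by positivity)]
  linarith

lemma wf_bound {N : ℕ} {ω p : ℝ} {u : EuclideanSpace ℝ (Fin N) → ℝ}
    (hu : IsGroundState N ω p u) :
    ∃ K > 0, ∃ δ > 0, ∀ x, |wf u x| ≤ K * Real.exp (-δ * ‖x‖) := by
  obtain ⟨C1, hC1, δ, hδ, h1⟩ := hu.decay 1
  obtain ⟨C2, hC2, δ2, hδ2, h2⟩ := hu.decay 2
  have hd : ∀ x, DifferentiableAt ℝ (fderiv ℝ u) x := fun x =>
    (hu.smooth.contDiffAt.fderiv_right (m := (⊤ : ℕ∞)) (by simp)).differentiableAt (by simp)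
  have hz : fderiv ℝ u 0 = 0 := by
    ext h
    rw [fderiv_self_eq]
    simp [pd_radial hu]
  have b1 : ∀ x, ‖fderiv ℝ u x‖ ≤ C1 * Real.exp (-δ * ‖x‖) := by
    intro x
    have := h1 x
    rwa [← norm_iteratedFDeriv_fderiv, norm_iteratedFDeriv_zero] at this
  have b2 : ∀ x, ‖fderiv ℝ (fderiv ℝ u) x‖ ≤ C2 := by
    intro x
    have := h2 x
    rw [← norm_iteratedFDeriv_fderiv, ← norm_iteratedFDeriv_fderiv,
      norm_iteratedFDeriv_zero] at this
    refine this.trans ?_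
    have : Real.exp (-δ2 * ‖x‖) ≤ 1 := by
      rw [Real.exp_le_one_iff]
      have := norm_nonneg x
      nlinarith
    nlinarith
  have b3 : ∀ x, ‖fderiv ℝ u x‖ ≤ C2 * ‖x‖ := by
    intro x
    have := convex_univ.norm_image_sub_le_of_norm_fderiv_le (𝕜 := ℝ) (f := fderiv ℝ u)
      (fun x _ => hd x) (fun x _ => b2 x) (Set.mem_univ 0) (Set.mem_univ x)
    simpa [hz] using this
  have b4 : ∀ x, |wf u x| * ‖x‖ ≤ ‖fderiv ℝ u x‖ := by
    intro x
    by_cases hx : x = 0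
    · subst hx; simp
    have hn : 0 < ‖x‖ := norm_pos_iff.2 hx
    have := (fderiv ℝ u x).le_opNorm x
    rw [fderiv_self_eq, Real.norm_eq_abs] at this
    rw [wf, abs_div, abs_of_pos (pow_pos hn 2), div_mul_eq_mul_div, div_le_iff₀ (by positivity)]
    nlinarith
  refine ⟨C1 + C2 * Real.exp δ, by positivity, δ, hδ, fun x => ?_⟩
  have hE := Real.exp_pos (-δ * ‖x‖)
  have hw := abs_nonneg (wf u x)
  rw [add_mul]
  rcases le_total 1 ‖x‖ with hx | hx
  · have : |wf u x| ≤ C1 * Real.exp (-δ * ‖x‖) := by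
      refine le_trans ?_ ((b4 x).trans (b1 x))
      nlinarith
    have : 0 ≤ C2 * Real.exp δ * Real.exp (-δ * ‖x‖) := by positivity
    linarith
  · have h3 : |wf u x| ≤ C2 := by
      by_cases h0 : x = 0
      · subst h0; simp [wf, hC2.le]
      · exact le_of_mul_le_mul_right ((b4 x).trans (b3 x)) (norm_pos_iff.2 h0)
    have h4 : 1 ≤ Real.exp δ * Real.exp (-δ * ‖x‖) := by
      rw [← Real.exp_add, Real.one_le_exp_iff]
      nlinarith
    have : 0 ≤ C1 * Real.exp (-δ * ‖x‖) := by positivity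
    nlinarith

lemma Gf_nonneg {N : ℕ} (u : EuclideanSpace ℝ (Fin N) → ℝ) : 0 ≤ Gf u := by
  intro x
  simp only [Gf, Pi.zero_apply]
  positivity

lemma Gf_integrable {N : ℕ} {ω p : ℝ} {u : EuclideanSpace ℝ (Fin N) → ℝ}
    (hu : IsGroundState N ω p u) : Integrable (Gf u) := by
  obtain ⟨K, hK, δ, hδ, hw⟩ := wf_bound hu
  obtain ⟨C, hC, δ0, hδ0, h0⟩ := hu.decay 0
  have hub : ∀ x, |u x| ≤ C := by
    intro x
    have := h0 x
    rw [norm_iteratedFDeriv_zero, Real.norm_eq_abs] at this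
    refine this.trans ?_
    have : Real.exp (-δ0 * ‖x‖) ≤ 1 := by
      rw [Real.exp_le_one_iff]
      have := norm_nonneg x
      nlinarith
    nlinarith
  have hmeas : Measurable (Gf u) := by
    have hum : Measurable u := hu.smooth.continuous.measurable
    have hpm : ∀ i, Measurable (pd i u) := fun i => (pd_contDiff i hu.smooth).continuous.measurable
    have hcm : ∀ i : Fin N, Measurable (fun y : EuclideanSpace ℝ (Fin N) => y i) :=
      fun i => (coord_contDiff i).continuous.measurable
    have hwm : Measurable (wf u) := by
      unfold wf
      exact (Finset.measurable_sum _ fun i _ => (hcm i).mul (hpm i)).div (measurable_norm.pow_const 2)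
    unfold Gf
    exact ((hum.pow_const 2).const_mul 2 |>.const_add 1).mul (hwm.pow_const 2)
  refine ((exp_integrable (N := N) (c := δ) hδ).const_mul ((1 + 2 * C ^ 2) * K ^ 2)).mono'
    hmeas.aestronglyMeasurable (Eventually.of_forall fun x => ?_)
  rw [Real.norm_of_nonneg (Gf_nonneg u x)]
  have e1 : u x ^ 2 ≤ C ^ 2 := sq_le_sq' (by linarith [abs_le.1 (hub x)]) (abs_le.1 (hub x)).2
  have hE := Real.exp_pos (-δ * ‖x‖)
  have hE1 : Real.exp (-δ * ‖x‖) ≤ 1 := by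
    rw [Real.exp_le_one_iff]
    have := norm_nonneg x
    nlinarith
  have e2 : wf u x ^ 2 ≤ K ^ 2 * Real.exp (-δ * ‖x‖) := by
    have h3 : wf u x ^ 2 ≤ (K * Real.exp (-δ * ‖x‖)) ^ 2 :=
      sq_le_sq' (by linarith [(abs_le.1 (hw x)).1]) (abs_le.1 (hw x)).2
    refine h3.trans ?_
    rw [mul_pow]
    gcongr
    nlinarith
  unfold Gf
  rw [mul_assoc]
  gcongr

lemma Gf_pos {N : ℕ} (hN : 2 ≤ N) {ω p : ℝ} {u : EuclideanSpace ℝ (Fin N) → ℝ}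
    (hu : IsGroundState N ω p u) : 0 < ∫ x, Gf u x := by
  rw [integral_pos_iff_support_of_nonneg (Gf_nonneg u) (Gf_integrable hu)]
  have hop : IsOpen (Function.support (Gf u)) := by
    rw [isOpen_iff_mem_nhds]
    intro x hx
    have hx0 : x ≠ 0 := by
      rintro rfl
      exact hx (by simp [Gf, wf])
    have hc : ContinuousAt (Gf u) x := by
      unfold Gf
      have h1 := (wf_cda hu.smooth hx0).continuousAt
      have h2 := hu.smooth.continuous.continuousAt (x := x)
      exact (continuousAt_const.add (continuousAt_const.mul (h2.pow 2))).mul (h1.pow 2)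
    exact hc.eventually_ne hx
  refine hop.measure_pos _ ?_
  by_contra hne
  rw [Set.not_nonempty_iff_eq_empty, Function.support_eq_empty_iff] at hne
  have hw : ∀ x, wf u x = 0 := by
    intro x
    have := congrFun hne x
    simp only [Gf, Pi.zero_apply, mul_eq_zero] at this
    rcases this with h | h
    · nlinarith [sq_nonneg (u x)]
    · simpa using h
  have hfd : ∀ x, fderiv ℝ u x = 0 := by
    intro x
    ext h
    rw [fderiv_self_eq]
    simp [pd_radial hu, hw]
  have hcst := is_const_of_fderiv_eq_zero (𝕜 := ℝ) (fun x => cda_diff hu.smooth.contDiffAt) hfd 0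
    (EuclideanSpace.single (⟨0, by omega⟩ : Fin N) (1 : ℝ))
  obtain ⟨U, hU, -, hUu⟩ := hu.radial
  rw [hUu, hUu] at hcst
  simp only [norm_zero, EuclideanSpace.norm_single, norm_one] at hcst
  have := hU (Set.mem_Ici.2 le_rfl) (Set.mem_Ici.2 zero_le_one) zero_lt_one
  linarith

def chi (N : ℕ) : ContDiffBump (0 : EuclideanSpace ℝ (Fin N)) := ⟨1, 2, one_pos, one_lt_two⟩

def phin (N : ℕ) (n : ℕ) (x : EuclideanSpace ℝ (Fin N)) : ℝ :=
  chi N (((n : ℝ) + 1)⁻¹ • x) - chi N (((n : ℝ) + 1) • x)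

lemma chi_contDiff (N : ℕ) : ContDiff ℝ (⊤ : ℕ∞) (chi N) := (chi N).contDiff

lemma chi_smul_contDiff (N : ℕ) (c : ℝ) :
    ContDiff ℝ (⊤ : ℕ∞) (fun x : EuclideanSpace ℝ (Fin N) => chi N (c • x)) :=
  (chi_contDiff N).comp (contDiff_const_smul c)

lemma phin_contDiff (N n : ℕ) : ContDiff ℝ (⊤ : ℕ∞) (phin N n) :=
  (chi_smul_contDiff N _).sub (chi_smul_contDiff N _)

lemma phin_compact (N n : ℕ) : HasCompactSupport (phin N n) := by
  have h : (0 : ℝ) < (n : ℝ) + 1 := by positivity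
  have h1 : HasCompactSupport (fun x : EuclideanSpace ℝ (Fin N) => chi N (((n : ℝ) + 1)⁻¹ • x)) :=
    (chi N).hasCompactSupport.comp_smul (inv_ne_zero h.ne')
  have h2 : HasCompactSupport (fun x : EuclideanSpace ℝ (Fin N) => chi N (((n : ℝ) + 1) • x)) :=
    (chi N).hasCompactSupport.comp_smul h.ne'
  exact h1.sub h2

lemma phin_zero (N n : ℕ) : phin N n =ᶠ[𝓝 0] fun _ => 0 := by
  have key : ∀ c : ℝ, ∀ᶠ x : EuclideanSpace ℝ (Fin N) in 𝓝 0, chi N (c • x) = 1 := by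
    intro c
    have ht : Tendsto (fun x : EuclideanSpace ℝ (Fin N) => c • x) (𝓝 0) (𝓝 0) := by
      have : Continuous (fun x : EuclideanSpace ℝ (Fin N) => c • x) := continuous_const_smul c
      simpa using this.tendsto 0
    exact ht.eventually (chi N).eventuallyEq_one
  filter_upwards [key (((n : ℝ) + 1)⁻¹), key ((n : ℝ) + 1)] with x h1 h2
  simp [phin, h1, h2]

lemma pd_smul {N : ℕ} (c : ℝ) (i : Fin N) (f : EuclideanSpace ℝ (Fin N) → ℝ) (x) :
    pd i (fun y => f (c • y)) x = c * pd i f (c • x) := by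
  simp [pd, fderiv_comp_smul]

lemma pd_phin (N n : ℕ) (i : Fin N) (x) : pd i (phin N n) x =
    ((n : ℝ) + 1)⁻¹ * pd i (chi N) (((n : ℝ) + 1)⁻¹ • x)
      - ((n : ℝ) + 1) * pd i (chi N) (((n : ℝ) + 1) • x) := by
  rw [← pd_smul, ← pd_smul]
  change fderiv ℝ (fun x : EuclideanSpace ℝ (Fin N) => chi N (((n : ℝ) + 1)⁻¹ • x)
    - chi N (((n : ℝ) + 1) • x)) x _ = _
  rw [fderiv_fun_sub (cda_diff (chi_smul_contDiff N _).contDiffAt)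
    (cda_diff (chi_smul_contDiff N _).contDiffAt)]
  rfl

lemma chi_bound (N : ℕ) : ∃ T : ℝ, 0 ≤ T ∧ ∀ (i : Fin N) (y), |‖y‖ * pd i (chi N) y| ≤ T := by
  have : ∀ i : Fin N, ∃ T : ℝ, ∀ y, ‖‖y‖ * pd i (chi N) y‖ ≤ T := by
    intro i
    have hc : HasCompactSupport (fun y => ‖y‖ * pd i (chi N) y) :=
      (pd_compact i (chi N).hasCompactSupport).mul_left
    exact hc.exists_bound_of_continuous
      (continuous_norm.mul (pd_contDiff i (chi_contDiff N)).continuous)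
  choose T hT using this
  refine ⟨∑ i, |T i|, Finset.sum_nonneg fun i _ => abs_nonneg _, fun i y => ?_⟩
  exact (hT i y).trans ((le_abs_self _).trans
    (Finset.single_le_sum (f := fun i => |T i|) (fun i _ => abs_nonneg _) (Finset.mem_univ i)))

lemma phin_bound (N : ℕ) : ∃ M : ℝ, ∀ (n : ℕ) (x),
    |‖x‖ ^ 2 * gradsq (phin N n) x - ((N : ℝ) - 1) * phin N n x ^ 2| ≤ M := by
  obtain ⟨T, hT0, hT⟩ := chi_bound N
  refine ⟨∑ i : Fin N, (2 * T) ^ 2 + |(N : ℝ) - 1|, fun n x => ?_⟩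
  have hk : (0 : ℝ) < (n : ℝ) + 1 := by positivity
  have h1 : ∀ i : Fin N, |‖x‖ * pd i (phin N n) x| ≤ 2 * T := by
    intro i
    have e : ‖x‖ * pd i (phin N n) x =
        ‖((n : ℝ) + 1)⁻¹ • x‖ * pd i (chi N) (((n : ℝ) + 1)⁻¹ • x)
        - ‖((n : ℝ) + 1) • x‖ * pd i (chi N) (((n : ℝ) + 1) • x) := by
      rw [pd_phin, norm_smul, norm_smul, Real.norm_of_nonneg hk.le,
        Real.norm_of_nonneg (inv_nonneg.2 hk.le)]
      ring
    rw [e]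
    refine (abs_sub _ _).trans ?_
    linarith [hT i (((n : ℝ) + 1)⁻¹ • x), hT i (((n : ℝ) + 1) • x)]
  have h2 : |phin N n x| ≤ 1 := by
    rw [abs_le, phin]
    have a1 := (chi N).nonneg' (((n : ℝ) + 1)⁻¹ • x)
    have a2 := (chi N).nonneg' (((n : ℝ) + 1) • x)
    have a3 := (chi N).le_one (x := ((n : ℝ) + 1)⁻¹ • x)
    have a4 := (chi N).le_one (x := ((n : ℝ) + 1) • x)
    constructor <;> linarith
  refine (abs_sub _ _).trans (add_le_add ?_ ?_)
  · rw [gradsq, Finset.mul_sum, abs_of_nonneg (Finset.sum_nonneg fun i _ => by positivity)]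
    refine Finset.sum_le_sum fun i _ => ?_
    rw [← mul_pow, ← sq_abs]
    exact pow_le_pow_left₀ (abs_nonneg _) (h1 i) 2
  · rw [abs_mul, abs_pow]
    exact mul_le_of_le_one_right (abs_nonneg _) (pow_le_one₀ (abs_nonneg _) h2)

lemma phin_lim (N : ℕ) {x : EuclideanSpace ℝ (Fin N)} (hx : x ≠ 0) :
    ∀ᶠ n : ℕ in atTop, phin N n x = 1 ∧ gradsq (phin N n) x = 0 := by
  have hn : 0 < ‖x‖ := norm_pos_iff.2 hx
  have t : Tendsto (fun n : ℕ => (n : ℝ) + 1) atTop atTop :=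
    tendsto_atTop_add_const_right _ _ tendsto_natCast_atTop_atTop
  filter_upwards [t.eventually_gt_atTop ‖x‖, t.eventually_gt_atTop (2 / ‖x‖)] with n h1 h2
  have hk : (0 : ℝ) < (n : ℝ) + 1 := by positivity
  have e1 : ⇑(chi N) =ᶠ[𝓝 (((n : ℝ) + 1)⁻¹ • x)] fun _ => 1 := by
    apply (chi N).eventuallyEq_one_of_mem_ball
    rw [mem_ball_zero_iff, norm_smul, Real.norm_of_nonneg (inv_nonneg.2 hk.le),
      inv_mul_lt_iff₀ hk]
    change ‖x‖ < ((n : ℝ) + 1) * 1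
    linarith
  have e2 : ⇑(chi N) =ᶠ[𝓝 (((n : ℝ) + 1) • x)] fun _ => 0 := by
    have ho : IsOpen {y : EuclideanSpace ℝ (Fin N) | 2 < ‖y‖} :=
      isOpen_lt continuous_const continuous_norm
    have hm : ((n : ℝ) + 1) • x ∈ {y : EuclideanSpace ℝ (Fin N) | 2 < ‖y‖} := by
      rw [Set.mem_setOf_eq, norm_smul, Real.norm_of_nonneg hk.le]
      rwa [div_lt_iff₀ hn] at h2
    filter_upwards [ho.mem_nhds hm] with y hy
    apply (chi N).zero_of_le_dist
    rw [dist_zero_right]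
    exact le_of_lt hy
  constructor
  · rw [phin, e1.eq_of_nhds, e2.eq_of_nhds, sub_zero]
  · rw [gradsq]
    refine Finset.sum_eq_zero fun i _ => ?_
    rw [pd_phin, (pd_congr i e1).eq_of_nhds, (pd_congr i e2).eq_of_nhds, pd_const, pd_const]
    simp

lemma exists_neg {N : ℕ} (hN : 2 ≤ N) {ω p : ℝ} {u : EuclideanSpace ℝ (Fin N) → ℝ}
    (hu : IsGroundState N ω p u) :
    ∃ ξ : EuclideanSpace ℝ (Fin N) → ℝ, ContDiff ℝ (⊤ : ℕ∞) ξ ∧ HasCompactSupport ξ ∧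
      (∫ x, Lplus ω p u ξ x * ξ x) < 0 := by
  obtain ⟨M, hM⟩ := phin_bound N
  have hG := Gf_integrable hu
  have hmeas : ∀ n, AEStronglyMeasurable (fun x => Gf u x *
      (‖x‖ ^ 2 * gradsq (phin N n) x - ((N : ℝ) - 1) * phin N n x ^ 2)) volume := by
    intro n
    have hc : Continuous (fun x =>
        ‖x‖ ^ 2 * gradsq (phin N n) x - ((N : ℝ) - 1) * phin N n x ^ 2) := by
      have h1 := (phin_contDiff N n).continuous
      have h2 : Continuous (gradsq (phin N n)) := by
        unfold gradsq
        exact continuous_finsetSum _ fun i _ => (pd_contDiff i (phin_contDiff N n)).continuous.pow 2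
      fun_prop
    exact hG.aestronglyMeasurable.mul hc.aestronglyMeasurable
  have hb : ∀ n x, ‖Gf u x *
      (‖x‖ ^ 2 * gradsq (phin N n) x - ((N : ℝ) - 1) * phin N n x ^ 2)‖ ≤ Gf u x * M := by
    intro n x
    rw [norm_mul, Real.norm_of_nonneg (Gf_nonneg u x)]
    exact mul_le_mul_of_nonneg_left (hM n x) (Gf_nonneg u x)
  have hint : ∀ n, Integrable (fun x => Gf u x *
      (‖x‖ ^ 2 * gradsq (phin N n) x - ((N : ℝ) - 1) * phin N n x ^ 2)) := fun n =>
    (hG.mul_const M).mono' (hmeas n) (Eventually.of_forall (hb n))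
  have hlim := tendsto_integral_of_dominated_convergence (μ := volume)
    (F := fun n x => Gf u x *
      (‖x‖ ^ 2 * gradsq (phin N n) x - ((N : ℝ) - 1) * phin N n x ^ 2))
    (f := fun x => Gf u x * (-((N : ℝ) - 1))) (fun x => Gf u x * M) hmeas (hG.mul_const M)
    (fun n => Eventually.of_forall (hb n)) (Eventually.of_forall fun x => by
      by_cases hx : x = 0
      · subst hx
        simp [Gf, wf]
      · refine tendsto_const_nhds.congr' ?_
        filter_upwards [phin_lim N hx] with n hn
        rw [hn.1, hn.2]
        ring)
  rw [integral_mul_const] at hlim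
  have hneg : (∫ x, Gf u x) * (-((N : ℝ) - 1)) < 0 := by
    have h2 : (2 : ℝ) ≤ N := by exact_mod_cast hN
    have := Gf_pos hN hu
    nlinarith
  obtain ⟨n, hn⟩ := (hlim.eventually_lt_const hneg).exists
  refine ⟨fun y => phin N n y * mf u y, xi_smooth hu.smooth (phin_contDiff N n) (phin_zero N n),
    (phin_compact N n).mul_right, ?_⟩
  rw [Q_eq hu (phin_contDiff N n) (phin_zero N n) (phin_compact N n) (hint n)]
  exact hn

/-- The quadratic form of `L₊` takes a negative value on a normalized smooth compactly
supported function; in particular `μ₁ = inf σ(L₊) < 0`. -/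
theorem stmt5 (N : ℕ) (hN : 2 ≤ N) (ω p : ℝ) (hω : 0 < ω) (hp : 1 < p)
    (hpmax : 3 ≤ N → p < (3 * (N : ℝ) + 2) / ((N : ℝ) - 2))
    (u : EuclideanSpace ℝ (Fin N) → ℝ) (hu : IsGroundState N ω p u) :
    ∃ ξ : EuclideanSpace ℝ (Fin N) → ℝ, ContDiff ℝ (⊤ : ℕ∞) ξ ∧ HasCompactSupport ξ ∧
      (∫ x, (ξ x) ^ 2 = 1) ∧ (∫ x, Lplus ω p u ξ x * ξ x) < 0 := by
  obtain ⟨ξ, hs, hc, hneg⟩ := exists_neg hN hu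
  have hpos : 0 < ∫ x, ξ x ^ 2 := by
    have hcont : Continuous (fun x => ξ x ^ 2) := hs.continuous.pow 2
    have hcs : HasCompactSupport (fun x => ξ x ^ 2) := by
      have : HasCompactSupport (fun x => ξ x * ξ x) := hc.mul_right
      simpa only [sq] using this
    rw [integral_pos_iff_support_of_nonneg (fun x => sq_nonneg (ξ x))
      (hcont.integrable_of_hasCompactSupport hcs)]
    refine hcont.isOpen_support.measure_pos _ ?_
    by_contra hne
    rw [Set.not_nonempty_iff_eq_empty, Function.support_eq_empty_iff] at hne
    have h0 : ∀ x, ξ x = 0 := fun x => by simpa using congrFun hne x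
    simp [h0] at hneg
  set c : ℝ := (√(∫ x, ξ x ^ 2))⁻¹ with hcdef
  have hc2 : c ^ 2 * ∫ x, ξ x ^ 2 = 1 := by
    rw [hcdef, inv_pow, Real.sq_sqrt hpos.le, inv_mul_cancel₀ hpos.ne']
  have hcpos : 0 < c := inv_pos.2 (Real.sqrt_pos.2 hpos)
  have hL : ∀ x, Lplus ω p u (fun y => c * ξ y) x = c * Lplus ω p u ξ x := by
    intro x
    rw [Lplus_mul ω p hu.smooth.contDiffAt contDiffAt_const hs.contDiffAt]
    have h4 : lap (fun _ : EuclideanSpace ℝ (Fin N) => c) x = 0 := by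
      have : ∀ i : Fin N, pd i (fun _ : EuclideanSpace ℝ (Fin N) => c) = fun _ => 0 := by
        intro i; funext y; exact pd_const c y i
      simp [lap, this, pd_const]
    simp [pd_const, h4]
  refine ⟨fun y => c * ξ y, contDiff_const.mul hs, hc.mul_left, ?_, ?_⟩
  · simp only [mul_pow]
    rw [integral_const_mul, hc2]
  · have : (fun x => Lplus ω p u (fun y => c * ξ y) x * (c * ξ x)) =
        fun x => c ^ 2 * (Lplus ω p u ξ x * ξ x) := by
      funext x
      rw [hL]; ring
    rw [this, integral_const_mul]
    exact mul_neg_of_pos_of_neg (by positivity) hneg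

end
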